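/- arXiv:1910.12478 — 3 statements merged into one kernel-verified Lean document; each statement's English description precedes it below -/
import Mathlib

section
/- Let {X_{n,α} : n ∈ ℕ, 1 ≤ α ≤ n} be a triangular array of real random variables on a common probability space. Suppose that for every q > 0 there exists a constant C_q ∈ ℝ such that (1/n)·∑_{α=1}^n |X_{n,α}|^q → C_q almost surely as n → ∞. Then for every p > 0, n^{−p} · max_{1≤α≤n} |X_{n,α}| → 0 almost surely as n → ∞. -/
/-!
With `A n` the empirical moment of order `q = 2 / p`, the bound `max |x_α| ≤ (∑ |x_α| ^ q) ^ (1 / q)`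
gives `n ^ (-p) * max |x_α| ≤ n ^ (-p / 2) * (A n) ^ (p / 2)`. The second factor converges because
`A n` does, and the first tends to `0`. A single order `q` therefore suffices for each `p`, and the
almost sure event is the one on which the moment of that order converges.
-/

open MeasureTheory Filter

theorem rpow_neg_mul_iSup_abs_le {p : ℝ} (hp : 0 < p) {n : ℕ} (hn : 0 < n) (x : Fin n → ℝ) :
    (n : ℝ) ^ (-p) * ⨆ α, |x α| ≤
      (n : ℝ) ^ (-(p / 2)) * ((1 / (n : ℝ)) * ∑ α, |x α| ^ (2 / p)) ^ (p / 2) := by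
  have hn' : (0 : ℝ) < n := by exact_mod_cast hn
  haveI : Nonempty (Fin n) := ⟨⟨0, hn⟩⟩
  set S := ∑ α, |x α| ^ (2 / p) with hS
  have hS0 : 0 ≤ S := Finset.sum_nonneg fun α _ => by positivity
  have hmax : ⨆ α, |x α| ≤ S ^ (p / 2) := by
    refine ciSup_le fun α => ?_
    have h1 : |x α| ^ (2 / p) ≤ S :=
      Finset.single_le_sum (f := fun α => |x α| ^ (2 / p)) (fun β _ => by positivity)
        (Finset.mem_univ α)
    calc |x α| = (|x α| ^ (2 / p)) ^ (p / 2) := by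
          rw [← Real.rpow_mul (abs_nonneg _), show 2 / p * (p / 2) = 1 by field_simp,
            Real.rpow_one]
      _ ≤ S ^ (p / 2) := Real.rpow_le_rpow (by positivity) h1 (by positivity)
  calc (n : ℝ) ^ (-p) * ⨆ α, |x α| ≤ (n : ℝ) ^ (-p) * S ^ (p / 2) := by gcongr
    _ = (n : ℝ) ^ (-(p / 2)) * ((1 / (n : ℝ)) * S) ^ (p / 2) := by
      rw [Real.mul_rpow (by positivity) hS0, one_div, Real.inv_rpow hn'.le,
        ← Real.rpow_neg hn'.le, ← mul_assoc, ← Real.rpow_add hn']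
      congr 2
      ring

/-- If for every `q > 0` the empirical `q`-th absolute moments `(1/n)∑_{α<n} |X_{n,α}|^q`
converge almost surely to a constant, then `n^{-p}·max_{α<n} |X_{n,α}| → 0` almost surely
for every `p > 0`. -/
theorem max_bound_of_empirical_moments
    {Ω : Type*} [MeasurableSpace Ω] (μ : Measure Ω) [IsProbabilityMeasure μ]
    (X : (n : ℕ) → Fin n → Ω → ℝ)
    (h : ∀ q : ℝ, 0 < q → ∃ Cq : ℝ, ∀ᵐ ω ∂μ,
      Tendsto (fun n : ℕ => (1 / (n : ℝ)) * ∑ α : Fin n, |X n α ω| ^ q)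
        atTop (nhds Cq)) :
    ∀ p : ℝ, 0 < p → ∀ᵐ ω ∂μ,
      Tendsto (fun n : ℕ => (n : ℝ) ^ (-p) * ⨆ α : Fin n, |X n α ω|)
        atTop (nhds 0) := by
  intro p hp
  obtain ⟨C, hC⟩ := h (2 / p) (by positivity)
  filter_upwards [hC] with ω hω
  have hpow : Tendsto (fun n : ℕ => (n : ℝ) ^ (-(p / 2))) atTop (nhds 0) :=
    (tendsto_rpow_neg_atTop (half_pos hp)).comp tendsto_natCast_atTop_atTop
  have hlim := hpow.mul (hω.rpow_const (p := p / 2) (Or.inr (half_pos hp).le))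
  rw [zero_mul] at hlim
  refine squeeze_zero' (Eventually.of_forall fun n => ?_) ?_ hlim
  · exact mul_nonneg (by positivity) (Real.iSup_nonneg fun α => abs_nonneg _)
  · filter_upwards [eventually_gt_atTop 0] with n hn
    exact rpow_neg_mul_iSup_abs_le hp hn fun α => X n α ω
end

section
/- Let M ≥ 2 be an integer, 0 < λ < 2, and C, c > 0. Let ψ : ℝ^M → ℝ be a measurable function satisfying |ψ(x)| ≤ exp(C·∑_{i=1}^M |x_i|^λ + c) for all x ∈ ℝ^M. Fix g ∈ ℝ^{M−1} and τ > 0, and define Ψ(w) := E_{z∼N(0,1)}[ ψ(g₁,…,g_{M−1}, w + τ·z) ]. Then for all w, ε ∈ ℝ, |Ψ(w) − Ψ(w+ε)| ≤ |ε| · τ^{−1} · R(τ) · Ψ̂(g) · exp( C·4^λ·(|w|^λ + |ε|^λ) ), where Ψ̂(g) := exp( C·2^λ·∑_{i=1}^{M−1} |g_i|^λ + c ) and R(τ) := E_{z∼N(0,1)}[ |z| · exp( C·2^λ·τ^λ·|z|^λ ) ]. -/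
open MeasureTheory ProbabilityTheory Filter

/-!
Averaging over `z ∼ N(0,1)` at the point `w + τ z` is integration against the Gaussian law
`N(w, τ²)`, so the parameter `w` can be moved from `ψ` (which is only measurable) onto the smooth
Gaussian density `p_w`.  By the fundamental theorem of calculus in the parameter,
`p_w(y) - p_{w+ε}(y)` is an integral over `s` between `w` and `w + ε` of `p_s(y) (y - s) / τ²`.
Tonelli's theorem then bounds the increment by the integral over these `s` of
`τ⁻¹ E[|h(s + τ z)| |z|]`, where `h y = ψ (g, y)` (`enorm_integral_gaussianReal_sub_le`).
Each of these expectations is controlled uniformly in `s` by applying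
`|a + b|^λ ≤ 2^λ (|a|^λ + |b|^λ)` twice.  Everything is finite because `λ < 2` makes
`exp (A |z|^λ)` integrable for the Gaussian law (`integrable_exp_abs_add_rpow`).
-/

lemma abs_add_rpow_le {lam : ℝ} (hlam : 0 < lam) (a b : ℝ) :
    |a + b| ^ lam ≤ 2 ^ lam * (|a| ^ lam + |b| ^ lam) := by
  have ha : (0 : ℝ) ≤ |a| ^ lam := by positivity
  have hb : (0 : ℝ) ≤ |b| ^ lam := by positivity
  have h1 : |a + b| ≤ 2 * max |a| |b| := by
    have := abs_add_le a b
    have := le_max_left |a| |b|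
    have := le_max_right |a| |b|
    linarith
  calc |a + b| ^ lam ≤ (2 * max |a| |b|) ^ lam :=
        Real.rpow_le_rpow (abs_nonneg _) h1 hlam.le
    _ = 2 ^ lam * (max |a| |b|) ^ lam := Real.mul_rpow (by norm_num) (by positivity)
    _ ≤ _ := by
        refine mul_le_mul_of_nonneg_left ?_ (by positivity)
        rcases max_choice |a| |b| with h | h <;> rw [h] <;> linarith

/-- A power with exponent below `2` is dominated by any multiple of the square, up to an additive
constant. -/
lemma exists_mul_rpow_le {lam A : ℝ} (hlam0 : 0 < lam) (hlam2 : lam < 2) (hA : 0 ≤ A) :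
    ∃ B : ℝ, ∀ t : ℝ, 0 ≤ t → A * t ^ lam ≤ t ^ 2 / 8 + B := by
  have h := tendsto_rpow_atTop (y := 2 - lam) (by linarith)
  obtain ⟨T, hT0, hT⟩ := (((h.eventually_ge_atTop (8 * A)).and
    (eventually_gt_atTop 0)).exists_forall_of_atTop.imp fun T hT =>
      (⟨(hT T le_rfl).2, fun t ht => (hT t ht).1⟩ : 0 < T ∧ ∀ t ≥ T, 8 * A ≤ t ^ (2 - lam)))
  refine ⟨A * T ^ lam, fun t ht => ?_⟩
  rcases le_total t T with h1 | h1
  · have := mul_le_mul_of_nonneg_left (Real.rpow_le_rpow ht h1 hlam0.le) hA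
    nlinarith [sq_nonneg t]
  · have htp : 0 < t := hT0.trans_le h1
    have h2 : t ^ (2 - lam) * t ^ lam = t ^ 2 := by
      rw [← Real.rpow_add htp, ← Real.rpow_natCast]; norm_num
    have h3 := mul_le_mul_of_nonneg_right (hT t h1) (Real.rpow_nonneg ht lam)
    have h4 : 0 ≤ A * T ^ lam := by positivity
    rw [h2] at h3
    linarith

/-- The exponent `|z|` absorbs the polynomial factor `|z|` of the Gaussian score. -/
lemma integrable_exp_abs_add_rpow {lam A : ℝ} (hlam0 : 0 < lam) (hlam2 : lam < 2) (hA : 0 ≤ A) :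
    Integrable (fun z => Real.exp (|z| + A * |z| ^ lam)) (gaussianReal 0 1) := by
  obtain ⟨B, hB⟩ := exists_mul_rpow_le hlam0 hlam2 hA
  rw [gaussianReal_of_var_ne_zero _ one_ne_zero, gaussianPDF_def,
    integrable_withDensity_iff_integrable_smul₀' (by fun_prop) (by simp)]
  simp only [smul_eq_mul, ENNReal.toReal_ofReal (gaussianPDFReal_nonneg _ _ _)]
  refine ((integrable_exp_neg_mul_sq (b := 1 / 4) (by norm_num)).const_mul
    ((√(2 * Real.pi * (1 : NNReal)))⁻¹ * Real.exp (B + 2))).mono' (by fun_prop)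
    (ae_of_all _ fun z => ?_)
  rw [Real.norm_of_nonneg (mul_nonneg (gaussianPDFReal_nonneg _ _ _) (Real.exp_pos _).le),
    gaussianPDFReal, mul_assoc (√_)⁻¹, mul_assoc (√_)⁻¹, ← Real.exp_add, ← Real.exp_add]
  refine mul_le_mul_of_nonneg_left (Real.exp_le_exp.2 ?_) (by positivity)
  have h1 := hB |z| (abs_nonneg z)
  have h2 := sq_abs z
  have h3 := sq_nonneg (|z| - 4)
  simp only [NNReal.coe_one, sub_zero, mul_one]
  nlinarith

lemma integrable_exp_rpow {lam A : ℝ} (hlam0 : 0 < lam) (hlam2 : lam < 2) (hA : 0 ≤ A) :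
    Integrable (fun z => Real.exp (A * |z| ^ lam)) (gaussianReal 0 1) := by
  refine (integrable_exp_abs_add_rpow hlam0 hlam2 hA).mono'
    (by fun_prop : Measurable _).aestronglyMeasurable (ae_of_all _ fun z => ?_)
  rw [Real.norm_of_nonneg (Real.exp_pos _).le, Real.exp_le_exp]
  linarith [abs_nonneg z]

lemma integrable_abs_mul_exp_rpow {lam A : ℝ} (hlam0 : 0 < lam) (hlam2 : lam < 2) (hA : 0 ≤ A) :
    Integrable (fun z => |z| * Real.exp (A * |z| ^ lam)) (gaussianReal 0 1) := by
  refine (integrable_exp_abs_add_rpow hlam0 hlam2 hA).mono'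
    (by fun_prop : Measurable _).aestronglyMeasurable (ae_of_all _ fun z => ?_)
  rw [Real.norm_of_nonneg (by positivity), Real.exp_add]
  refine mul_le_mul_of_nonneg_right ?_ (Real.exp_pos _).le
  linarith [Real.add_one_le_exp |z|]

lemma map_affine_gaussianReal (s τ : ℝ) :
    (gaussianReal 0 1).map (fun z => s + τ * z) = gaussianReal s (.mk (τ ^ 2) (sq_nonneg _)) := by
  have h : (fun z : ℝ => s + τ * z) = (fun x => x + s) ∘ (fun z => τ * z) := by
    ext z; simp [add_comm]
  rw [h, ← Measure.map_map (by fun_prop) (by fun_prop), gaussianReal_map_const_mul,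
    gaussianReal_map_add_const]
  simp

lemma hasDerivAt_gaussianPDFReal_mean (v : NNReal) (y s : ℝ) :
    HasDerivAt (fun s => gaussianPDFReal s v y) (gaussianPDFReal s v y * ((y - s) / v)) s := by
  have h1 : HasDerivAt (fun s : ℝ => -(y - s) ^ 2 / (2 * v)) ((y - s) / v) s := by
    have := ((((hasDerivAt_id s).const_sub y).pow 2).neg).div_const (2 * (v : ℝ))
    refine this.congr_deriv ?_
    rcases eq_or_ne (v : ℝ) 0 with h | h
    · simp [h]
    · simp only [id]; push_cast; field_simp
  refine (h1.exp.const_mul (√(2 * Real.pi * v))⁻¹).congr_deriv ?_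
  rw [gaussianPDFReal]; ring

lemma enorm_gaussianPDFReal_sub_le (v : NNReal) (y a b : ℝ) :
    ‖gaussianPDFReal a v y - gaussianPDFReal b v y‖ₑ
      ≤ ∫⁻ s in Set.uIoc a b, gaussianPDF s v y * ‖(y - s) / v‖ₑ := by
  have hc : Continuous fun s => gaussianPDFReal s v y * ((y - s) / v) := by
    unfold gaussianPDFReal; fun_prop
  have h := intervalIntegral.integral_eq_sub_of_hasDerivAt
    (fun s _ => hasDerivAt_gaussianPDFReal_mean v y s) (hc.intervalIntegrable a b)
  rw [← enorm_neg, neg_sub, ← h]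
  have h2 : ‖∫ s in a..b, gaussianPDFReal s v y * ((y - s) / v)‖ₑ
      = ‖∫ s in Set.uIoc a b, gaussianPDFReal s v y * ((y - s) / v)‖ₑ := by
    rw [← ofReal_norm, ← ofReal_norm, intervalIntegral.norm_intervalIntegral_eq]
  rw [h2]
  refine (enorm_integral_le_lintegral_enorm _).trans (le_of_eq ?_)
  refine lintegral_congr fun s => ?_
  rw [enorm_mul, Real.enorm_of_nonneg (gaussianPDFReal_nonneg _ _ _), gaussianPDF]

/-- Only the density is differentiated in the mean, so `h` need not be regular; Tonelli's theorem
exchanges the integrals over the mean and over the point. -/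
lemma enorm_integral_gaussianReal_sub_le {h : ℝ → ℝ} (hm : Measurable h) {v : NNReal} (hv : v ≠ 0)
    {a b : ℝ} (ha : Integrable h (gaussianReal a v)) (hb : Integrable h (gaussianReal b v)) :
    ‖(∫ y, h y ∂gaussianReal a v) - ∫ y, h y ∂gaussianReal b v‖ₑ
      ≤ ∫⁻ s in Set.uIoc a b, ∫⁻ y, ‖(y - s) / v‖ₑ * ‖h y‖ₑ ∂gaussianReal s v := by
  have key : ∀ s, Integrable h (gaussianReal s v) →
      Integrable (fun y => gaussianPDFReal s v y • h y) := by
    intro s hs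
    rw [gaussianReal_of_var_ne_zero _ hv, gaussianPDF_def,
      integrable_withDensity_iff_integrable_smul₀' (by fun_prop) (by simp)] at hs
    simpa only [ENNReal.toReal_ofReal (gaussianPDFReal_nonneg _ _ _)] using hs
  rw [integral_gaussianReal_eq_integral_smul hv, integral_gaussianReal_eq_integral_smul hv,
    ← integral_sub (key a ha) (key b hb)]
  calc _ ≤ ∫⁻ y, ‖gaussianPDFReal a v y • h y - gaussianPDFReal b v y • h y‖ₑ :=
        enorm_integral_le_lintegral_enorm _
    _ ≤ ∫⁻ y, ∫⁻ s in Set.uIoc a b, gaussianPDF s v y * (‖(y - s) / v‖ₑ * ‖h y‖ₑ) := by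
        refine lintegral_mono fun y => ?_
        rw [← sub_smul, smul_eq_mul, enorm_mul]
        simp only [← mul_assoc]
        rw [lintegral_mul_const _ (by fun_prop)]
        gcongr
        exact enorm_gaussianPDFReal_sub_le v y a b
    _ = ∫⁻ s in Set.uIoc a b, ∫⁻ y, gaussianPDF s v y * (‖(y - s) / v‖ₑ * ‖h y‖ₑ) :=
        lintegral_lintegral_swap (by fun_prop)
    _ = _ := by
        refine lintegral_congr fun s => ?_
        rw [gaussianReal_of_var_ne_zero _ hv,
          lintegral_withDensity_eq_lintegral_mul _ (by fun_prop) (by fun_prop)]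
        rfl

/-- The one-dimensional estimate, for the section `h` of the function along the last coordinate. -/
lemma gaussian_smoothing_increment_bound_real {lam C K : ℝ}
    (hlam0 : 0 < lam) (hlam2 : lam < 2) (hC : 0 < C)
    {h : ℝ → ℝ} (hm : Measurable h) (hK : 0 ≤ K)
    (hh : ∀ y, |h y| ≤ K * Real.exp (C * |y| ^ lam)) {τ : ℝ} (hτ : 0 < τ) (w ε : ℝ) :
    |(∫ z, h (w + τ * z) ∂gaussianReal 0 1) - ∫ z, h (w + ε + τ * z) ∂gaussianReal 0 1|
      ≤ |ε| * τ⁻¹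
          * (∫ z, |z| * Real.exp (C * 2 ^ lam * τ ^ lam * |z| ^ lam) ∂gaussianReal 0 1)
          * K * Real.exp (C * 4 ^ lam * (|w| ^ lam + |ε| ^ lam)) := by
  set A := C * 2 ^ lam * τ ^ lam with hAdef
  have hA : 0 ≤ A := by positivity
  set v : NNReal := .mk (τ ^ 2) (sq_nonneg _) with hvdef
  have hv : v ≠ 0 := by
    rw [← NNReal.coe_ne_zero]; exact (pow_pos hτ 2).ne'
  have hgrow : ∀ s z, |h (s + τ * z)|
      ≤ K * Real.exp (C * 2 ^ lam * |s| ^ lam) * Real.exp (A * |z| ^ lam) := by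
    intro s z
    refine (hh _).trans ?_
    rw [mul_assoc, ← Real.exp_add]
    refine mul_le_mul_of_nonneg_left (Real.exp_le_exp.2 ?_) hK
    have h1 := mul_le_mul_of_nonneg_left (abs_add_rpow_le hlam0 s (τ * z)) hC.le
    rw [abs_mul, abs_of_pos hτ, Real.mul_rpow hτ.le (abs_nonneg z)] at h1
    rw [hAdef]
    linarith
  have hint : ∀ s, Integrable h (gaussianReal s v) := by
    intro s
    rw [← map_affine_gaussianReal, integrable_map_measure hm.aestronglyMeasurable (by fun_prop)]
    exact ((integrable_exp_rpow hlam0 hlam2 hA).const_mul _).mono'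
      (by fun_prop : Measurable _).aestronglyMeasurable (ae_of_all _ fun z => hgrow s z)
  have hchange : ∀ s, ∫ z, h (s + τ * z) ∂gaussianReal 0 1 = ∫ y, h y ∂gaussianReal s v := by
    intro s
    rw [← map_affine_gaussianReal, integral_map (by fun_prop) hm.aestronglyMeasurable]
  set R := ∫ z, |z| * Real.exp (A * |z| ^ lam) ∂gaussianReal 0 1 with hR
  have hR0 : 0 ≤ R := integral_nonneg fun z => by positivity
  set E := Real.exp (C * 4 ^ lam * (|w| ^ lam + |ε| ^ lam)) with hE
  have hinner : ∀ s ∈ Set.uIoc w (w + ε),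
      ∫⁻ y, ‖(y - s) / v‖ₑ * ‖h y‖ₑ ∂gaussianReal s v ≤ ENNReal.ofReal (τ⁻¹ * K * E * R) := by
    intro s hs
    have hsw : |s - w| ≤ |ε| := by
      simpa using Set.abs_sub_left_of_mem_uIcc (Set.uIoc_subset_uIcc hs)
    have hsE : Real.exp (C * 2 ^ lam * |s| ^ lam) ≤ E := by
      refine Real.exp_le_exp.2 ?_
      have h1 := abs_add_rpow_le hlam0 w (s - w)
      have h2 : |s - w| ^ lam ≤ |ε| ^ lam := Real.rpow_le_rpow (abs_nonneg _) hsw hlam0.le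
      have h4 : (4 : ℝ) ^ lam = 2 ^ lam * 2 ^ lam := by
        rw [← Real.mul_rpow (by norm_num) (by norm_num)]; norm_num
      rw [add_sub_cancel] at h1
      have h3 : |s| ^ lam ≤ 2 ^ lam * (|w| ^ lam + |ε| ^ lam) := h1.trans (by gcongr)
      calc C * 2 ^ lam * |s| ^ lam ≤ C * 2 ^ lam * (2 ^ lam * (|w| ^ lam + |ε| ^ lam)) := by gcongr
        _ = _ := by rw [h4]; ring
    rw [← map_affine_gaussianReal, lintegral_map (by fun_prop) (by fun_prop), hR,
      ← integral_const_mul, ofReal_integral_eq_lintegral_ofReal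
        ((integrable_abs_mul_exp_rpow hlam0 hlam2 hA).const_mul _)
        (ae_of_all _ fun z => by positivity)]
    refine lintegral_mono fun z => ?_
    rw [← enorm_mul, Real.enorm_eq_ofReal_abs]
    refine ENNReal.ofReal_le_ofReal ?_
    have hq : (s + τ * z - s) / (v : ℝ) = τ⁻¹ * z := by
      change (s + τ * z - s) / τ ^ 2 = τ⁻¹ * z
      field_simp
      ring
    rw [hq, abs_mul, abs_mul, abs_of_pos (inv_pos.2 hτ)]
    calc τ⁻¹ * |z| * |h (s + τ * z)|
        ≤ τ⁻¹ * |z| * (K * E * Real.exp (A * |z| ^ lam)) := by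
          gcongr
          exact (hgrow s z).trans (by gcongr)
      _ = _ := by ring
  rw [hchange, hchange]
  have hfin : 0 ≤ |ε| * τ⁻¹ * R * K * E := by positivity
  rw [← ENNReal.ofReal_le_ofReal_iff hfin, ← Real.enorm_eq_ofReal_abs]
  calc _ ≤ ∫⁻ s in Set.uIoc w (w + ε), ∫⁻ y, ‖(y - s) / v‖ₑ * ‖h y‖ₑ ∂gaussianReal s v :=
        enorm_integral_gaussianReal_sub_le hm hv (hint _) (hint _)
    _ ≤ ∫⁻ s in Set.uIoc w (w + ε), ENNReal.ofReal (τ⁻¹ * K * E * R) :=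
        setLIntegral_mono measurable_const hinner
    _ = _ := by
        rw [setLIntegral_const, Real.volume_uIoc, add_sub_cancel_left,
          ← ENNReal.ofReal_mul (by positivity)]
        congr 1; ring

/-- Smoothness induced by Gaussian averaging: for a controlled `ψ : ℝ^{M} → ℝ` (with
`M = M' + 1 ≥ 2` coordinates), `g ∈ ℝ^{M'}`, `τ > 0`, and
`Ψ(w) = E_{z∼N(0,1)}[ψ(g, w + τz)]`, one has
`|Ψ(w) − Ψ(w+ε)| ≤ |ε| τ⁻¹ R(τ) Ψ̂(g) exp(C·4^λ(|w|^λ + |ε|^λ))`. -/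
theorem gaussian_smoothing_increment_bound
    (M' : ℕ) (hM' : 1 ≤ M') (lam C c : ℝ)
    (hlam0 : 0 < lam) (hlam2 : lam < 2) (hC : 0 < C) (hc : 0 < c)
    (ψ : (Fin (M' + 1) → ℝ) → ℝ) (hψm : Measurable ψ)
    (hψ : ∀ x, |ψ x| ≤ Real.exp (C * ∑ i, |x i| ^ lam + c))
    (g : Fin M' → ℝ) (τ : ℝ) (hτ : 0 < τ) (w ε : ℝ) :
    |(∫ z, ψ (Fin.snoc g (w + τ * z)) ∂ gaussianReal 0 1)
        - ∫ z, ψ (Fin.snoc g (w + ε + τ * z)) ∂ gaussianReal 0 1|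
      ≤ |ε| * τ⁻¹
          * (∫ z, |z| * Real.exp (C * 2 ^ lam * τ ^ lam * |z| ^ lam) ∂ gaussianReal 0 1)
          * Real.exp (C * 2 ^ lam * (∑ i, |g i| ^ lam) + c)
          * Real.exp (C * 4 ^ lam * (|w| ^ lam + |ε| ^ lam)) := by
  have hsnoc : Measurable fun y : ℝ => (Fin.snoc g y : Fin (M' + 1) → ℝ) := by
    refine measurable_pi_lambda _ fun i => ?_
    refine Fin.lastCases ?_ (fun j => ?_) i
    · simpa using measurable_id'
    · simp
  refine gaussian_smoothing_increment_bound_real hlam0 hlam2 hC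
    (h := fun y => ψ (Fin.snoc g y)) (hψm.comp hsnoc) (Real.exp_pos _).le (fun y => ?_) hτ w ε
  refine (hψ _).trans ?_
  rw [← Real.exp_add, Real.exp_le_exp, Fin.sum_univ_castSucc]
  simp only [Fin.snoc_castSucc, Fin.snoc_last]
  have hS : 0 ≤ ∑ i, |g i| ^ lam := Finset.sum_nonneg fun i _ => by positivity
  have h2 : (1 : ℝ) ≤ 2 ^ lam := Real.one_le_rpow (by norm_num) hlam0.le
  have := mul_le_mul_of_nonneg_left (mul_le_mul_of_nonneg_right h2 hS) hC.le
  linarith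
end

section
/- Let l ≥ 1 and let (K_n)_{n≥1} be a sequence of real l×l matrices converging entrywise to a matrix K̊, and suppose rank K_n = rank K̊ for all sufficiently large n. Then the Moore–Penrose pseudoinverses converge entrywise: K_n⁺ → K̊⁺ as n → ∞. -/
/-!
Write `A` for the limit matrix, `C` for its pseudoinverse, and let `X` be close to `A` with
`rank X = rank A`. Then `G = 1 + C (X - A)` is invertible, and `Y = G⁻¹ C` satisfies `Y X Y = Y`,
since `C A G = C X`. As `rank Y = rank C = rank A = rank X`, the idempotent `X Y` has the same
range as `X`, so also `X Y X = X`. Thus `Y` is a reflexive generalized inverse of `X`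
depending continuously on `X`, with value `C` at `X = A`.

The pseudoinverse `B` of `X` is recovered from `Y` as `B = (B X) Y (X B)`. The orthogonal
projections `X B` and `B X` are rational functions of the idempotents `Q = X Y` and `S = Y X`:
`X B = Q (1 + Q - Qᵀ)⁻¹` and `B X = (1 + S - Sᵀ)⁻¹ S`. At `X = A` the idempotents are symmetric,
so both inverses are inverses of matrices tending to `1`, and everything converges.
-/

open MeasureTheory Filter Matrix

/-- `B` is the Moore–Penrose pseudoinverse of `A`: the four Penrose conditions. -/
def IsMoorePenrose {m n : Type*} [Fintype m] [Fintype n]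
    (A : Matrix m n ℝ) (B : Matrix n m ℝ) : Prop :=
  A * B * A = A ∧ B * A * B = B ∧ (A * B)ᵀ = A * B ∧ (B * A)ᵀ = B * A

open Topology in
/-- Inversion of matrices is continuous at `1`, and matrices near `1` are invertible. -/
theorem tendsto_inv_one_of_tendsto_one {l : ℕ} {G : ℕ → Matrix (Fin l) (Fin l) ℝ}
    (h : Tendsto G atTop (𝓝 1)) :
    Tendsto (fun n => (G n)⁻¹) atTop (𝓝 1) ∧ ∀ᶠ n in atTop, IsUnit (G n).det := by
  constructor
  · have hc : ContinuousAt Inv.inv (1 : Matrix (Fin l) (Fin l) ℝ) := by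
      apply continuousAt_matrix_inv
      rw [det_one]
      exact NormedRing.inverse_continuousAt (1 : ℝˣ)
    simpa [ContinuousAt, Function.comp_def] using hc.tendsto.comp h
  · have hd : Tendsto (fun n => (G n).det) atTop (𝓝 1) := by
      simpa [Function.comp_def] using
        ((continuous_id.matrix_det).tendsto (1 : Matrix (Fin l) (Fin l) ℝ)).comp h
    filter_upwards [hd.eventually_ne one_ne_zero] with n hn
    exact isUnit_iff_ne_zero.mpr hn

/-- An outer inverse `Y` of `X` whose rank is at least that of `X` is also an inner inverse. -/
theorem mul_mul_self_of_outer_inverse {l : ℕ} {X Y : Matrix (Fin l) (Fin l) ℝ}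
    (h : Y * X * Y = Y) (hr : X.rank ≤ Y.rank) : X * Y * X = X := by
  have h1 : X.rank ≤ (X * Y).rank := by
    refine hr.trans ?_
    calc Y.rank = (Y * (X * Y)).rank := by rw [← mul_assoc, h]
      _ ≤ (X * Y).rank := rank_mul_le_right _ _
  have hle : LinearMap.range (X * Y).mulVecLin ≤ LinearMap.range X.mulVecLin := by
    rw [mulVecLin_mul]
    exact LinearMap.range_comp_le_range _ _
  have heq := Submodule.eq_of_le_of_finrank_le hle h1
  -- Each `X v` lies in the range of the idempotent `X Y`, hence is fixed by it.
  apply ext_of_mulVec_single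
  intro i
  obtain ⟨w, hw⟩ : X.mulVecLin (Pi.single i 1) ∈ LinearMap.range (X * Y).mulVecLin :=
    heq ▸ LinearMap.mem_range_self _ _
  simp only [mulVecLin_apply] at hw
  rw [← mulVec_mulVec, ← hw, mulVec_mulVec, mul_assoc, ← mul_assoc Y, h]

/-- If `C` is an outer inverse of `A`, then `(1 + C (X - A))⁻¹ C` is an outer inverse of `X`. -/
theorem outer_inverse_perturb {l : ℕ} {A C X : Matrix (Fin l) (Fin l) ℝ}
    (h : C * A * C = C) (hG : IsUnit (1 + C * (X - A)).det) :
    (1 + C * (X - A))⁻¹ * C * X * ((1 + C * (X - A))⁻¹ * C) = (1 + C * (X - A))⁻¹ * C := by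
  have h1 : C * A * (1 + C * (X - A)) = C * X := by
    rw [mul_add, ← mul_assoc, h]
    noncomm_ring
  generalize 1 + C * (X - A) = G at *
  calc G⁻¹ * C * X * (G⁻¹ * C) = G⁻¹ * (C * X) * G⁻¹ * C := by noncomm_ring
    _ = G⁻¹ * (C * A * (G * G⁻¹) * C) := by rw [← h1]; noncomm_ring
    _ = G⁻¹ * C := by rw [mul_nonsing_inv _ hG, mul_one, h]

/-- The orthogonal projection `X B` in terms of the idempotent `X Y`, for any inner inverse `Y`. -/
theorem IsMoorePenrose.mul_eq {l : ℕ} {X B Y : Matrix (Fin l) (Fin l) ℝ}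
    (hB : IsMoorePenrose X B) (hY : X * Y * X = X)
    (hu : IsUnit (1 + X * Y - (X * Y)ᵀ).det) :
    X * B = X * Y * (1 + X * Y - (X * Y)ᵀ)⁻¹ := by
  obtain ⟨h1, -, h3, -⟩ := hB
  have e1 : X * B * (X * Y) = X * Y := by rw [← mul_assoc, h1]
  have e2 : X * B * (X * Y)ᵀ = X * B := by
    conv_lhs => rw [← h3]
    rw [← transpose_mul, ← mul_assoc, hY, h3]
  have e : X * B * (1 + X * Y - (X * Y)ᵀ) = X * Y := by
    rw [mul_sub, mul_add, e1, e2, mul_one, add_sub_cancel_left]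
  calc X * B = X * B * (1 + X * Y - (X * Y)ᵀ) * (1 + X * Y - (X * Y)ᵀ)⁻¹ :=
        (mul_nonsing_inv_cancel_right _ _ hu).symm
    _ = _ := by rw [e]

/-- The orthogonal projection `B X` in terms of the idempotent `Y X`, for any inner inverse `Y`. -/
theorem IsMoorePenrose.mul_eq' {l : ℕ} {X B Y : Matrix (Fin l) (Fin l) ℝ}
    (hB : IsMoorePenrose X B) (hY : X * Y * X = X)
    (hu : IsUnit (1 + Y * X - (Y * X)ᵀ).det) :
    B * X = (1 + Y * X - (Y * X)ᵀ)⁻¹ * (Y * X) := by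
  obtain ⟨h1, -, -, h4⟩ := hB
  have e1 : Y * X * (B * X) = Y * X := by rw [mul_assoc, ← mul_assoc X, h1]
  have e2 : (Y * X)ᵀ * (B * X) = B * X := by
    conv_lhs => rw [← h4]
    rw [← transpose_mul, mul_assoc, ← mul_assoc X, hY, h4]
  have e : (1 + Y * X - (Y * X)ᵀ) * (B * X) = Y * X := by
    rw [sub_mul, add_mul, e1, e2, one_mul, add_sub_cancel_left]
  calc B * X = (1 + Y * X - (Y * X)ᵀ)⁻¹ * ((1 + Y * X - (Y * X)ᵀ) * (B * X)) :=
        (nonsing_inv_mul_cancel_left _ _ hu).symm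
    _ = _ := by rw [e]

/-- Continuity of the Moore–Penrose pseudoinverse on matrices of fixed rank: if `Kₙ → K̊`
entrywise and `rank Kₙ = rank K̊` eventually, then `Kₙ⁺ → K̊⁺` entrywise. -/
theorem pseudoinverse_continuous_of_rank_eq
    (l : ℕ) (hl : 1 ≤ l)
    (K : ℕ → Matrix (Fin l) (Fin l) ℝ) (Klim : Matrix (Fin l) (Fin l) ℝ)
    (hconv : ∀ i j, Tendsto (fun n => K n i j) atTop (nhds (Klim i j)))
    (hrank : ∀ᶠ n in atTop, (K n).rank = Klim.rank)
    (B : ℕ → Matrix (Fin l) (Fin l) ℝ) (Blim : Matrix (Fin l) (Fin l) ℝ)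
    (hB : ∀ n, IsMoorePenrose (K n) (B n)) (hBlim : IsMoorePenrose Klim Blim) :
    ∀ i j, Tendsto (fun n => B n i j) atTop (nhds (Blim i j)) := by
  have hK : Tendsto K atTop (nhds Klim) :=
    tendsto_pi_nhds.mpr fun i => tendsto_pi_nhds.mpr fun j => hconv i j
  suffices h : Tendsto B atTop (nhds Blim) from
    fun i j => tendsto_pi_nhds.mp (tendsto_pi_nhds.mp h i) j
  obtain ⟨c1, c2, c3, c4⟩ := id hBlim
  let Y : ℕ → Matrix (Fin l) (Fin l) ℝ := fun n => (1 + Blim * (K n - Klim))⁻¹ * Blim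
  have hG : Tendsto (fun n => 1 + Blim * (K n - Klim)) atTop (nhds 1) := by
    simpa using (hK.sub_const Klim).const_mul Blim |>.const_add 1
  obtain ⟨hGi, hGu⟩ := tendsto_inv_one_of_tendsto_one hG
  have hY : Tendsto Y atTop (nhds Blim) := by
    simpa using hGi.mul_const Blim
  have hQ : Tendsto (fun n => K n * Y n) atTop (nhds (Klim * Blim)) := hK.mul hY
  have hS : Tendsto (fun n => Y n * K n) atTop (nhds (Blim * Klim)) := hY.mul hK
  have hQ1 : Tendsto (fun n => 1 + K n * Y n - (K n * Y n)ᵀ) atTop (nhds 1) := by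
    simpa [c3, -transpose_mul] using
      (hQ.const_add 1).sub ((continuous_id.matrix_transpose.tendsto _).comp hQ)
  have hS1 : Tendsto (fun n => 1 + Y n * K n - (Y n * K n)ᵀ) atTop (nhds 1) := by
    simpa [c4, -transpose_mul] using
      (hS.const_add 1).sub ((continuous_id.matrix_transpose.tendsto _).comp hS)
  obtain ⟨hQi, hQu⟩ := tendsto_inv_one_of_tendsto_one hQ1
  obtain ⟨hSi, hSu⟩ := tendsto_inv_one_of_tendsto_one hS1
  have hlim := ((hSi.mul hS).mul hY).mul (hQ.mul hQi)
  have hval : 1 * (Blim * Klim) * Blim * (Klim * Blim * 1) = Blim := by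
    rw [one_mul, mul_one, c2, ← mul_assoc, c2]
  rw [hval] at hlim
  refine hlim.congr' ?_
  filter_upwards [hrank, hGu, hQu, hSu] with n hr hg hq hs
  have hYr : (Y n).rank = Blim.rank :=
    rank_mul_eq_right_of_isUnit_det _ _ (isUnit_nonsing_inv_det _ hg)
  have hAC : Klim.rank ≤ Blim.rank := by
    calc Klim.rank = (Klim * Blim * Klim).rank := by rw [c1]
      _ ≤ (Klim * Blim).rank := rank_mul_le_left _ _
      _ ≤ Blim.rank := rank_mul_le_right _ _
  have hin : K n * Y n * K n = K n :=
    mul_mul_self_of_outer_inverse (outer_inverse_perturb c2 hg) (by rw [hr, hYr]; exact hAC)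
  rw [← (hB n).mul_eq hin hq, ← (hB n).mul_eq' hin hs]
  calc B n * K n * Y n * (K n * B n) = B n * (K n * Y n * K n) * B n := by noncomm_ring
    _ = B n := by rw [hin, (hB n).2.1]
end
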